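/- arXiv:1607.05429 — 2 statements merged into one kernel-verified Lean document; each statement's English description precedes it below -/
import Mathlib

section
/- Let N, finite index types m and n, A : Matrix m m ℝ, and for each i : Fin N matrices B i : Matrix m n ℝ, C i : Matrix n m ℝ, D i : Matrix n n ℝ with every D i invertible be given. Let J be the arrowhead block matrix Matrix.fromBlocks A B' C' (Matrix.blockDiagonal D), where B' p (i,q) = B i p q and C' (i,p) q = C i p q. Then J is invertible (IsUnit J) if and only if the reduced matrix A - ∑ i : Fin N, (B i) * (D i)⁻¹ * (C i) is invertible. -/
open Matrix

section BlockRowCol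

variable {ι l m n R : Type*}

/-- The block row matrix `[B i₁ | B i₂ | ⋯]` of a family of equally sized matrices. Columns are
indexed by `n × ι`, with the block index second, to match `Matrix.blockDiagonal`. -/
def blockRow (B : ι → Matrix m n R) : Matrix m (n × ι) R :=
  Matrix.of fun p qi => B qi.2 p qi.1

/-- The block column matrix stacking a family of equally sized matrices. Rows are indexed by
`n × ι`, with the block index second, to match `Matrix.blockDiagonal`. -/
def blockCol (C : ι → Matrix n m R) : Matrix (n × ι) m R :=
  Matrix.of fun pi q => C pi.2 pi.1 q

variable [Fintype ι] [Fintype n] [NonUnitalNonAssocSemiring R]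

theorem blockRow_mul_blockCol (B : ι → Matrix l n R) (C : ι → Matrix n m R) :
    blockRow B * blockCol C = ∑ i, B i * C i := by
  ext p q
  simp only [blockRow, blockCol, mul_apply, of_apply, Matrix.sum_apply,
    Fintype.sum_prod_type_right]

theorem blockRow_mul_blockDiagonal [DecidableEq ι] (B : ι → Matrix l n R)
    (D : ι → Matrix n m R) :
    blockRow B * blockDiagonal D = blockRow fun i => B i * D i := by
  ext p ⟨q, i⟩
  simp only [blockRow, mul_apply, of_apply, blockDiagonal_apply, Fintype.sum_prod_type, mul_ite,
    mul_zero, Finset.sum_ite_eq', Finset.mem_univ, if_true]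

end BlockRowCol

section BlockDiagonalInverse

variable {ι l m n R : Type*} [Fintype ι] [DecidableEq ι] [Fintype n] [DecidableEq n] [CommRing R]

theorem isUnit_blockDiagonal {D : ι → Matrix n n R} (hD : ∀ i, IsUnit (D i)) :
    IsUnit (blockDiagonal D) :=
  (Pi.isUnit_iff.2 hD).map (blockDiagonalRingHom n ι R)

theorem inv_blockDiagonal {D : ι → Matrix n n R} (hD : ∀ i, IsUnit (D i)) :
    (blockDiagonal D)⁻¹ = blockDiagonal fun i => (D i)⁻¹ := by
  have mul_inv_eq_one : (fun i => D i * (D i)⁻¹) = 1 :=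
    funext fun i => mul_nonsing_inv _ ((isUnit_iff_isUnit_det _).1 (hD i))
  apply inv_eq_right_inv
  rw [← blockDiagonal_mul, mul_inv_eq_one, blockDiagonal_one]

theorem blockRow_mul_inv_blockDiagonal_mul_blockCol (B : ι → Matrix l n R)
    (C : ι → Matrix n m R) {D : ι → Matrix n n R} (hD : ∀ i, IsUnit (D i)) :
    blockRow B * (blockDiagonal D)⁻¹ * blockCol C = ∑ i, B i * (D i)⁻¹ * C i := by
  rw [inv_blockDiagonal hD, blockRow_mul_blockDiagonal, blockRow_mul_blockCol]

end BlockDiagonalInverse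

section SchurComplement

variable {ι m n R : Type*} [Fintype m] [DecidableEq m] [Fintype n] [DecidableEq n] [CommRing R]

theorem isUnit_fromBlocks_iff_of_isUnit₂₂ (A : Matrix m m R) (B : Matrix m n R)
    (C : Matrix n m R) {D : Matrix n n R} (hD : IsUnit D) :
    IsUnit (fromBlocks A B C D) ↔ IsUnit (A - B * D⁻¹ * C) := by
  let := hD.invertible
  rw [isUnit_fromBlocks_iff_of_invertible₂₂, invOf_eq_nonsing_inv]

theorem arrowhead_isUnit_iff_schur_isUnit_general [Fintype ι] [DecidableEq ι]
    (A : Matrix m m R) (B : ι → Matrix m n R) (C : ι → Matrix n m R)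
    {D : ι → Matrix n n R} (hD : ∀ i, IsUnit (D i)) :
    IsUnit (fromBlocks A (blockRow B) (blockCol C) (blockDiagonal D)) ↔
      IsUnit (A - ∑ i, B i * (D i)⁻¹ * C i) := by
  rw [isUnit_fromBlocks_iff_of_isUnit₂₂ A _ _ (isUnit_blockDiagonal hD),
    blockRow_mul_inv_blockDiagonal_mul_blockCol B C hD]

end SchurComplement

/-- The full arrowhead multiscale Jacobian is invertible iff its macroscale
Schur-complement (reduced) Jacobian is invertible. (Mathlib's `Matrix.blockDiagonal`
is indexed by `n × Fin N`, with the block index `i : Fin N` in the second component.) -/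
theorem arrowhead_isUnit_iff_schur_isUnit
    (N : ℕ) (m n : Type*) [Fintype m] [Fintype n] [DecidableEq m] [DecidableEq n]
    (A : Matrix m m ℝ) (B : Fin N → Matrix m n ℝ) (C : Fin N → Matrix n m ℝ)
    (D : Fin N → Matrix n n ℝ) (hD : ∀ i, IsUnit (D i)) :
    IsUnit (Matrix.fromBlocks A
        (Matrix.of fun p (qi : n × Fin N) => B qi.2 p qi.1)
        (Matrix.of fun (pi : n × Fin N) q => C pi.2 pi.1 q)
        (Matrix.blockDiagonal D)) ↔
      IsUnit (A - ∑ i : Fin N, B i * (D i)⁻¹ * C i) :=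
  arrowhead_isUnit_iff_schur_isUnit_general A B C hD
end

section
/- Let C_sol, C_com, C_jac, N_NR, N_TW, N_TS, N_WR, N_GP, N_dim and κ be real numbers with C_sol > 0, C_com > 0, C_jac > 0, N_NR > 0, N_TW > 0, N_TS > 0, N_WR > 0, N_GP > 0, N_dim > 0 and 0 < κ < 1. Assume: (1) (N_TW / N_TS) * N_NR * C_jac = κ * (C_sol + (N_TW / N_TS) * C_com); (2) N_WR * (1 + κ) < N_NR * N_dim (i.e. N_WR < N_dim * N_NR / (1 + κ)); and (3) N_dim * N_TW ≤ N_TS. Then the waveform relaxation cost is strictly smaller than the monolithic cost: N_TS * N_WR * N_GP * (C_sol + (N_TW / N_TS) * (N_NR * C_jac + C_com)) < N_TS * N_NR * N_GP * (N_dim * C_sol + C_com). -/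
/-!
Spread over the time steps of its window, a waveform relaxation iteration costs
`(1 + κ) (C_sol + ρ C_com)` per time step and Gauß point, where `ρ = N_TW / N_TS`. By the bound on
`N_WR`, all iterations together cost less than `N_NR N_dim (C_sol + ρ C_com)`, and since
`N_dim ρ ≤ 1`, this is at most the monolithic cost `N_NR (N_dim C_sol + C_com)`.
-/

section StepCost

variable {R : Type*} [CommSemiring R] {C_sol C_com C_jac N_NR N_WR N_dim ρ κ : R}

theorem wr_step_cost_eq (hjac : ρ * N_NR * C_jac = κ * (C_sol + ρ * C_com)) :
    C_sol + ρ * (N_NR * C_jac + C_com) = (1 + κ) * (C_sol + ρ * C_com) :=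
  calc C_sol + ρ * (N_NR * C_jac + C_com)
      = ρ * N_NR * C_jac + (C_sol + ρ * C_com) := by ring
    _ = (1 + κ) * (C_sol + ρ * C_com) := by rw [hjac]; ring

variable [PartialOrder R]

theorem dim_mul_amortized_cost_le [IsOrderedRing R] (hCcom : 0 ≤ C_com) (hwin : N_dim * ρ ≤ 1) :
    N_dim * (C_sol + ρ * C_com) ≤ N_dim * C_sol + C_com :=
  calc N_dim * (C_sol + ρ * C_com)
      = N_dim * C_sol + N_dim * ρ * C_com := by ring
    _ ≤ N_dim * C_sol + C_com := by gcongr; exact mul_le_of_le_one_left hCcom hwin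

theorem wr_step_cost_lt_monolithic_step_cost [IsStrictOrderedRing R]
    (hCsol : 0 < C_sol) (hCcom : 0 ≤ C_com) (hNNR : 0 ≤ N_NR) (hρ : 0 ≤ ρ)
    (hjac : ρ * N_NR * C_jac = κ * (C_sol + ρ * C_com))
    (hWR : N_WR * (1 + κ) < N_NR * N_dim) (hwin : N_dim * ρ ≤ 1) :
    N_WR * (C_sol + ρ * (N_NR * C_jac + C_com)) < N_NR * (N_dim * C_sol + C_com) := by
  have amortized_pos : 0 < C_sol + ρ * C_com := by positivity
  calc N_WR * (C_sol + ρ * (N_NR * C_jac + C_com))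
      = N_WR * (1 + κ) * (C_sol + ρ * C_com) := by rw [wr_step_cost_eq hjac, mul_assoc]
    _ < N_NR * N_dim * (C_sol + ρ * C_com) := mul_lt_mul_of_pos_right hWR amortized_pos
    _ = N_NR * (N_dim * (C_sol + ρ * C_com)) := mul_assoc _ _ _
    _ ≤ N_NR * (N_dim * C_sol + C_com) :=
      mul_le_mul_of_nonneg_left (dim_mul_amortized_cost_le hCcom hwin) hNNR

end StepCost

theorem wr_cheaper_than_monolithic_general {K : Type*} [Field K] [LinearOrder K]
    [IsStrictOrderedRing K] {C_sol C_com C_jac N_NR N_TW N_TS N_WR N_GP N_dim κ : K}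
    (hCsol : 0 < C_sol) (hCcom : 0 ≤ C_com) (hNNR : 0 ≤ N_NR) (hNTW : 0 ≤ N_TW)
    (hNTS : 0 < N_TS) (hNGP : 0 < N_GP)
    (hjac : (N_TW / N_TS) * N_NR * C_jac = κ * (C_sol + (N_TW / N_TS) * C_com))
    (hWR : N_WR * (1 + κ) < N_NR * N_dim)
    (hwin : N_dim * N_TW ≤ N_TS) :
    N_TS * N_WR * N_GP * (C_sol + (N_TW / N_TS) * (N_NR * C_jac + C_com))
      < N_TS * N_NR * N_GP * (N_dim * C_sol + C_com) := by
  have dim_mul_ratio_le_one : N_dim * (N_TW / N_TS) ≤ 1 := by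
    rwa [← mul_div_assoc, div_le_one hNTS]
  have step_cost_lt := wr_step_cost_lt_monolithic_step_cost hCsol hCcom hNNR
    (div_nonneg hNTW hNTS.le) hjac hWR dim_mul_ratio_le_one
  rw [mul_right_comm N_TS N_WR, mul_right_comm N_TS N_NR, mul_assoc _ N_WR, mul_assoc _ N_NR]
  exact mul_lt_mul_of_pos_left step_cost_lt (mul_pos hNTS hNGP)

/-- Efficiency criterion of the waveform relaxation HMM: under the paper's assumptions,
in particular `N_WR < N_dim N_NR / (1 + κ)` and sufficiently many time steps per time
window, the waveform relaxation cost is strictly smaller than the monolithic cost. -/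
theorem wr_cheaper_than_monolithic
    (C_sol C_com C_jac N_NR N_TW N_TS N_WR N_GP N_dim κ : ℝ)
    (hCsol : 0 < C_sol) (hCcom : 0 < C_com) (hCjac : 0 < C_jac)
    (hNNR : 0 < N_NR) (hNTW : 0 < N_TW) (hNTS : 0 < N_TS) (hNWR : 0 < N_WR)
    (hNGP : 0 < N_GP) (hNdim : 0 < N_dim) (hκ0 : 0 < κ) (hκ1 : κ < 1)
    (hjac : (N_TW / N_TS) * N_NR * C_jac = κ * (C_sol + (N_TW / N_TS) * C_com))
    (hWR : N_WR * (1 + κ) < N_NR * N_dim)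
    (hwin : N_dim * N_TW ≤ N_TS) :
    N_TS * N_WR * N_GP * (C_sol + (N_TW / N_TS) * (N_NR * C_jac + C_com))
      < N_TS * N_NR * N_GP * (N_dim * C_sol + C_com) :=
  wr_cheaper_than_monolithic_general hCsol hCcom.le hNNR.le hNTW.le hNTS hNGP hjac hWR hwin
end
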